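/- There is a uniform constant C such that for every w ∈ C₀^∞(ℝ³) and every x ∈ ℝ³ with |x| ≥ 2: |w(x)| ≤ C Σ_{|α|+j≤2} ( ∫_{{y ∈ ℝ³ : | |y| − |x| | ≤ 1}} |Ω^α ∂_r^j w(y)|² |y|^{−2} dy )^{1/2}, where ∂_r = (y/|y|)·∇ is the radial derivative and Ω^α denotes a composition of |α| of the rotation vector fields. -/

import Mathlib

open MeasureTheory Real Finset

noncomputable section

/-- Points of space `ℝ³`. -/
abbrev Sp : Type := Fin 3 → ℝ

/-- Spatial partial derivative `∂_j`. -/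
def pd3 (j : Fin 3) (w : Sp → ℝ) : Sp → ℝ := fun x => fderiv ℝ w x (Pi.single j 1)

/-- The three Euclidean rotation fields `Ω_{ij} = x_i∂_j - x_j∂_i`, `1 ≤ i < j ≤ 3`. -/
def Rot3 : Fin 3 → (Sp → ℝ) → Sp → ℝ :=
  ![fun w x => x 0 * pd3 1 w x - x 1 * pd3 0 w x,
    fun w x => x 0 * pd3 2 w x - x 2 * pd3 0 w x,
    fun w x => x 1 * pd3 2 w x - x 2 * pd3 1 w x]

/-- `Ω^α`: a composition of `m` rotation fields. -/
def Rot3Comp : ∀ {m : ℕ}, (Fin m → Fin 3) → (Sp → ℝ) → Sp → ℝ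
  | 0, _, w => w
  | _ + 1, α, w => Rot3 (α 0) (Rot3Comp (fun i => α i.succ) w)

/-- `∂_x^β`: a composition of `m` spatial derivatives. -/
def Pd3Comp : ∀ {m : ℕ}, (Fin m → Fin 3) → (Sp → ℝ) → Sp → ℝ
  | 0, _, w => w
  | _ + 1, β, w => pd3 (β 0) (Pd3Comp (fun i => β i.succ) w)

/-- Euclidean length `r = |x|` of a spatial point. -/
def rad (x : Sp) : ℝ := Real.sqrt (∑ i, (x i) ^ 2)

/-- Japanese bracket `⟨z⟩ = (1+z²)^{1/2}`. -/
def jb (z : ℝ) : ℝ := Real.sqrt (1 + z ^ 2)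

/-- The radial derivative `∂_r = (y/|y|)·∇`. -/
def radDeriv (w : Sp → ℝ) : Sp → ℝ := fun y => ∑ i, (y i / rad y) * pd3 i w y

/-- `∂_r^j`: the `j`-fold radial derivative. -/
def radDerivIter : ℕ → (Sp → ℝ) → Sp → ℝ
  | 0, w => w
  | j + 1, w => radDeriv (radDerivIter j w)

/-!
The radial shift `Ψ_c(y) = (1 + c / |y|) y` acts on `ℝ₊ × S²` by translation in the first factor.
It therefore commutes with `∂_r` and the `Ω_k`, preserves the measure `|y|⁻² dy`, and carries the
shell of radius `|x|` to a shell of fixed radius `R₀ > 1` without changing any of the integrals.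
On this compact shell, away from the origin, the fields `∂_r, Ω_k` span the tangent space with
bounded coefficients, so the integrals control the `H²` norm on a ball around the shifted point.
The Sobolev embedding `H² ⊂ L^∞` on that ball is Taylor's formula, based at the points of the ball
and averaged over it: in the remainder, `∫₀¹ t^n ∫ |D^{n+1}u(z + tv)| dv dt` is finite by
Cauchy–Schwarz because `t^n t^{-d/2}` is integrable at `0` when `d < 2(n + 1)`.
-/

section LpNorm

variable {α F : Type*} [MeasurableSpace α] [NormedAddCommGroup F] {ν : Measure α} {f : α → F}
  {p : ENNReal}

theorem lpNorm_mono_ae_real {g : α → ℝ} (hg : MemLp g p ν) (h : ∀ᵐ x ∂ν, ‖f x‖ ≤ g x) :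
    lpNorm f p ν ≤ lpNorm g p ν := by
  by_cases hf : AEStronglyMeasurable f ν
  · rw [← toReal_eLpNorm hf, ← toReal_eLpNorm hg.aestronglyMeasurable]
    exact ENNReal.toReal_mono hg.eLpNorm_ne_top (eLpNorm_mono_ae_real h)
  · rw [lpNorm_of_not_aestronglyMeasurable hf]
    exact lpNorm_nonneg

theorem lpNorm_mono_measure {ν' : Measure α} (hf : MemLp f p ν') (h : ν ≤ ν') :
    lpNorm f p ν ≤ lpNorm f p ν' := by
  rw [← toReal_eLpNorm (hf.mono_measure h).aestronglyMeasurable,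
    ← toReal_eLpNorm hf.aestronglyMeasurable]
  exact ENNReal.toReal_mono hf.eLpNorm_ne_top (eLpNorm_mono_measure f h)

theorem lpNorm_two_eq_sqrt_integral (hf : AEStronglyMeasurable f ν) :
    lpNorm f 2 ν = √(∫ x, ‖f x‖ ^ 2 ∂ν) := by
  rw [lpNorm_eq_integral_norm_rpow_toReal (by norm_num) (by norm_num) hf, Real.sqrt_eq_rpow]
  norm_num

theorem integral_norm_le_sqrt_mul_lpNorm_two [IsFiniteMeasure ν] (hf : MemLp f 2 ν) :
    ∫ x, ‖f x‖ ∂ν ≤ √(ν.real Set.univ) * lpNorm f 2 ν := by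
  have h := integral_mul_le_Lp_mul_Lq_of_nonneg (μ := ν) Real.HolderConjugate.two_two
    (.of_forall fun x => norm_nonneg (f x)) (.of_forall fun _ => zero_le_one)
    (by simpa using hf.norm) (memLp_const 1)
  rw [lpNorm_two_eq_sqrt_integral hf.aestronglyMeasurable, mul_comm, Real.sqrt_eq_rpow,
    Real.sqrt_eq_rpow]
  simpa using h

theorem memLp_restrict_of_continuousOn_isCompact [TopologicalSpace α] [T2Space α]
    [OpensMeasurableSpace α] [IsFiniteMeasureOnCompacts ν]
    {K : Set α} (hf : ContinuousOn f K) (hK : IsCompact K) : MemLp f p (ν.restrict K) := by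
  have : IsFiniteMeasure (ν.restrict K) :=
    isFiniteMeasure_restrict.2 (hK.measure_lt_top (μ := ν)).ne
  obtain ⟨C, hC⟩ := hK.exists_bound_of_continuousOn hf
  exact MemLp.of_bound (hf.aestronglyMeasurable_of_isCompact hK hK.measurableSet) C
    ((ae_restrict_iff' hK.measurableSet).2 (.of_forall hC))

end LpNorm

section SobolevEmbedding

open Metric Module

variable {E F : Type*} [NormedAddCommGroup E] [NormedSpace ℝ E] [NormedAddCommGroup F] {z : E}
  {r : ℝ}

theorem add_smul_mem_closedBall {v : E} {s : ℝ} (hs : s ∈ Set.Icc (0 : ℝ) 1)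
    (hv : v ∈ closedBall (0 : E) r) : z + s • v ∈ closedBall z r := by
  rw [mem_closedBall_zero_iff] at hv
  rw [mem_closedBall, dist_self_add_left, norm_smul, Real.norm_of_nonneg hs.1]
  exact (mul_le_of_le_one_left (norm_nonneg v) hs.2).trans hv

theorem norm_continuousMultilinearMap_apply_const_le [NormedSpace ℝ F] {i N : ℕ} (hi : i ≤ N)
    (T : ContinuousMultilinearMap ℝ (fun _ : Fin i => E) F) {v : E} (hv : ‖v‖ ≤ r) :
    ‖T fun _ => v‖ ≤ (1 + r) ^ N * ‖T‖ := by
  have hr : 0 ≤ r := (norm_nonneg v).trans hv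
  have hpow : ‖v‖ ^ i ≤ (1 + r) ^ N :=
    (pow_le_pow_left₀ (norm_nonneg v) (by linarith) i).trans (pow_le_pow_right₀ (by linarith) hi)
  refine (T.le_opNorm _).trans ?_
  rw [prod_const, card_univ, Fintype.card_fin, mul_comm]
  exact mul_le_mul_of_nonneg_right hpow (norm_nonneg T)

/-- Taylor's formula at `z + v`, read as a formula for the value at `z`. -/
theorem norm_le_sum_norm_iteratedFDeriv_add_integral [NormedSpace ℝ F] [CompleteSpace F] {n : ℕ}
    {u : E → F} {v : E} (hv : v ∈ closedBall (0 : E) r)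
    (hu : ∀ y ∈ closedBall z r, ContDiffAt ℝ (n + 1) u y) :
    ‖u z‖ ≤ (1 + r) ^ (n + 1) * (∑ i ∈ range (n + 1), ‖iteratedFDeriv ℝ i u (z + v)‖ +
      ∫ s in (0 : ℝ)..1, s ^ n * ‖iteratedFDeriv ℝ (n + 1) u (z + s • v)‖) := by
  have hvr : ‖-v‖ ≤ r := (norm_neg v).trans_le (mem_closedBall_zero_iff.1 hv)
  have norm_apply_le (i : ℕ) (hi : i ≤ n + 1) (y : E) :
      ‖iteratedFDeriv ℝ i u y fun _ => -v‖ ≤ (1 + r) ^ (n + 1) * ‖iteratedFDeriv ℝ i u y‖ :=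
    norm_continuousMultilinearMap_apply_const_le hi _ hvr
  have inv_factorial_le (k : ℕ) : ‖((Nat.factorial k : ℝ))⁻¹‖ ≤ 1 := by
    rw [norm_inv, Real.norm_natCast]
    exact inv_le_one_of_one_le₀ (mod_cast k.factorial_pos)
  have segment (t : ℝ) : z + v + t • -v = z + (1 - t) • v := by module
  have hmem {t : ℝ} (ht : t ∈ Set.Icc (0 : ℝ) 1) : z + t • v ∈ closedBall z r :=
    add_smul_mem_closedBall ht hv
  have taylor := map_add_eq_sum_add_integral_iteratedFDeriv (f := u) (x := z + v) (y := -v) (n := n)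
    fun t ht => segment t ▸ hu _ (hmem ⟨by linarith [ht.2], by linarith [ht.1]⟩)
  have hD : ContinuousOn (fun s : ℝ => iteratedFDeriv ℝ (n + 1) u (z + s • v)) (Set.Icc 0 1) :=
    fun s hs => ContinuousAt.continuousWithinAt <|
      ((hu _ (hmem hs)).continuousAt_iteratedFDeriv le_rfl).comp
        (f := fun s : ℝ => z + s • v) (by fun_prop)
  have remainder_le : ‖∫ s in (0 : ℝ)..1, s ^ n • iteratedFDeriv ℝ (n + 1) u (z + s • v)
        (fun _ => -v)‖ ≤ ∫ s in (0 : ℝ)..1, (1 + r) ^ (n + 1) *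
          (s ^ n * ‖iteratedFDeriv ℝ (n + 1) u (z + s • v)‖) := by
    refine intervalIntegral.norm_integral_le_of_norm_le zero_le_one
      (.of_forall fun s hs => ?_) (ContinuousOn.intervalIntegrable_of_Icc zero_le_one ?_)
    · rw [norm_smul, norm_pow, Real.norm_of_nonneg hs.1.le, mul_left_comm]
      exact mul_le_mul_of_nonneg_left (norm_apply_le _ le_rfl _) (pow_nonneg hs.1.le n)
    · fun_prop
  simp only [segment, add_neg_cancel_right] at taylor
  rw [intervalIntegral.integral_comp_sub_left (f := fun s => s ^ n •
    iteratedFDeriv ℝ (n + 1) u (z + s • v) (fun _ => -v)), sub_self, sub_zero] at taylor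
  rw [taylor, mul_add, mul_sum, ← intervalIntegral.integral_const_mul]
  refine (norm_add_le _ _).trans
    (add_le_add ((norm_sum_le _ _).trans (sum_le_sum fun k hk => ?_)) ?_)
  · rw [norm_smul]
    exact (mul_le_of_le_one_left (norm_nonneg _) (inv_factorial_le k)).trans
      (norm_apply_le k (mem_range.1 hk).le _)
  · rw [norm_smul]
    exact (mul_le_of_le_one_left (norm_nonneg _) (inv_factorial_le n)).trans remainder_le

theorem continuousOn_iteratedFDeriv [NormedSpace ℝ F] {N : WithTop ℕ∞} {u : E → F} {s : Set E}
    (hu : ∀ y ∈ s, ContDiffAt ℝ N u y) {i : ℕ} (hi : i ≤ N) :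
    ContinuousOn (iteratedFDeriv ℝ i u) s :=
  fun y hy => ((hu y hy).continuousAt_iteratedFDeriv hi).continuousWithinAt

variable [MeasurableSpace E] [BorelSpace E] {μ : Measure E} [FiniteDimensional ℝ E]
  [μ.IsAddHaarMeasure]

theorem setIntegral_closedBall_comp_add_smul [NormedSpace ℝ F] (f : E → F) (z : E) {s : ℝ}
    (hs : 0 < s) : ∫ v in closedBall 0 r, f (z + s • v) ∂μ =
      (s ^ finrank ℝ E)⁻¹ • ∫ y in closedBall z (s * r), f y ∂μ := by
  rw [Measure.setIntegral_comp_smul_of_pos μ (fun v => f (z + v)) _ hs,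
    _root_.smul_closedBall' hs.ne', smul_zero, Real.norm_of_nonneg hs.le]
  congr 1
  have h := (measurePreserving_add_left μ z).setIntegral_preimage_emb
    (measurableEmbedding_addLeft z) f (closedBall z (s * r))
  rwa [preimage_add_closedBall, sub_self] at h

theorem setIntegral_norm_comp_add_smul_le_lpNorm {h : E → F} (hr : 0 ≤ r)
    (hh : ContinuousOn h (closedBall z r)) {s : ℝ} (hs : s ∈ Set.Ioc (0 : ℝ) 1) :
    ∫ v in closedBall 0 r, ‖h (z + s • v)‖ ∂μ ≤ s ^ (-(finrank ℝ E / 2 : ℝ)) *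
      (√(μ.real (closedBall 0 r)) * lpNorm h 2 (μ.restrict (closedBall z r))) := by
  have hsub : μ.restrict (closedBall z (s * r)) ≤ μ.restrict (closedBall z r) :=
    Measure.restrict_mono (closedBall_subset_closedBall (mul_le_of_le_one_left hr hs.2)) le_rfl
  have hh2 : MemLp h 2 (μ.restrict (closedBall z r)) :=
    memLp_restrict_of_continuousOn_isCompact hh (isCompact_closedBall z r)
  have : IsFiniteMeasure (μ.restrict (closedBall z (s * r))) :=
    isFiniteMeasure_restrict.2 (isCompact_closedBall z (s * r)).measure_lt_top.ne
  have hvol : μ.real (closedBall z (s * r)) = s ^ finrank ℝ E * μ.real (closedBall 0 r) := by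
    rw [measureReal_def, Measure.addHaar_closedBall_mul_of_pos μ z hs.1, ENNReal.toReal_mul,
      ENNReal.toReal_ofReal (pow_nonneg hs.1.le _), measureReal_def]
  calc ∫ v in closedBall 0 r, ‖h (z + s • v)‖ ∂μ
      = (s ^ finrank ℝ E)⁻¹ * ∫ y in closedBall z (s * r), ‖h y‖ ∂μ :=
        setIntegral_closedBall_comp_add_smul (fun y => ‖h y‖) z hs.1
    _ ≤ (s ^ finrank ℝ E)⁻¹ * (√(s ^ finrank ℝ E * μ.real (closedBall 0 r)) *
          lpNorm h 2 (μ.restrict (closedBall z r))) := by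
        refine mul_le_mul_of_nonneg_left ?_ (inv_nonneg.2 (pow_nonneg hs.1.le _))
        refine (integral_norm_le_sqrt_mul_lpNorm_two (hh2.mono_measure hsub)).trans ?_
        rw [measureReal_restrict_apply_univ, hvol]
        gcongr
        exact lpNorm_mono_measure hh2 hsub
    _ = _ := by
      have hpow : (s ^ finrank ℝ E)⁻¹ * √(s ^ finrank ℝ E) = s ^ (-(finrank ℝ E / 2 : ℝ)) := by
        rw [Real.sqrt_eq_rpow, ← Real.rpow_natCast, ← Real.rpow_neg hs.1.le,
          ← Real.rpow_mul hs.1.le, ← Real.rpow_add hs.1]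
        ring_nf
      rw [Real.sqrt_mul (pow_nonneg hs.1.le _), ← hpow]
      ring

theorem integrable_prod_pow_mul_norm_comp_add_smul {h : E → F}
    (hh : ContinuousOn h (closedBall z r)) (n : ℕ) :
    Integrable (fun p : E × ℝ => p.2 ^ n * ‖h (z + p.2 • p.1)‖)
      ((μ.restrict (closedBall 0 r)).prod (volume.restrict (Set.Ioc 0 1))) := by
  rw [Measure.prod_restrict]
  have hcont : ContinuousOn (fun p : E × ℝ => p.2 ^ n * ‖h (z + p.2 • p.1)‖)
      (closedBall 0 r ×ˢ Set.Icc 0 1) :=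
    (by fun_prop : Continuous fun p : E × ℝ => p.2 ^ n).continuousOn.mul
      (hh.comp (by fun_prop) fun p hp => add_smul_mem_closedBall hp.2 hp.1).norm
  exact (hcont.integrableOn_compact ((isCompact_closedBall 0 r).prod isCompact_Icc)).mono_set
    (Set.prod_mono subset_rfl Set.Ioc_subset_Icc_self)

theorem setIntegral_integral_pow_mul_norm_le_lpNorm {n : ℕ} (hn : finrank ℝ E < 2 * (n + 1))
    (hr : 0 ≤ r) {h : E → F} (hh : ContinuousOn h (closedBall z r)) :
    ∫ v in closedBall 0 r, (∫ s in (0 : ℝ)..1, s ^ n * ‖h (z + s • v)‖) ∂μ ≤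
      (n - finrank ℝ E / 2 + 1 : ℝ)⁻¹ *
        (√(μ.real (closedBall 0 r)) * lpNorm h 2 (μ.restrict (closedBall z r))) := by
  have hexp : (-1 : ℝ) < n - finrank ℝ E / 2 := by
    have : (finrank ℝ E : ℝ) < 2 * (n + 1) := mod_cast hn
    linarith
  have hint := integrable_prod_pow_mul_norm_comp_add_smul (μ := μ) hh n
  simp only [intervalIntegral.integral_of_le zero_le_one]
  rw [integral_integral_swap hint]
  calc ∫ s in Set.Ioc (0 : ℝ) 1, ∫ v in closedBall 0 r, s ^ n * ‖h (z + s • v)‖ ∂μ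
      ≤ ∫ s in Set.Ioc (0 : ℝ) 1, s ^ (n - finrank ℝ E / 2 : ℝ) *
          (√(μ.real (closedBall 0 r)) * lpNorm h 2 (μ.restrict (closedBall z r))) := by
        refine setIntegral_mono_on hint.integral_prod_right
          ((intervalIntegral.intervalIntegrable_rpow' hexp).1.mul_const _) measurableSet_Ioc
          fun s hs => ?_
        rw [integral_const_mul, sub_eq_add_neg, Real.rpow_add hs.1, Real.rpow_natCast, mul_assoc]
        exact mul_le_mul_of_nonneg_left (setIntegral_norm_comp_add_smul_le_lpNorm hr hh hs)
          (pow_nonneg hs.1.le n)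
    _ = _ := by
        rw [integral_mul_const, ← intervalIntegral.integral_of_le zero_le_one,
          integral_rpow (.inl hexp), Real.one_rpow, Real.zero_rpow (by linarith), sub_zero,
          one_div]

theorem measureReal_mul_norm_le_sum_integral [NormedSpace ℝ F] [CompleteSpace F] {n : ℕ}
    {u : E → F} (hu : ∀ y ∈ closedBall z r, ContDiffAt ℝ (n + 1) u y) :
    μ.real (closedBall 0 r) * ‖u z‖ ≤ (1 + r) ^ (n + 1) *
      (∑ i ∈ range (n + 1), ∫ v in closedBall 0 r, ‖iteratedFDeriv ℝ i u (z + v)‖ ∂μ +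
        ∫ v in closedBall 0 r,
          (∫ s in (0 : ℝ)..1, s ^ n * ‖iteratedFDeriv ℝ (n + 1) u (z + s • v)‖) ∂μ) := by
  have hD (i : ℕ) (hi : i ≤ n + 1) : ContinuousOn (iteratedFDeriv ℝ i u) (closedBall z r) :=
    continuousOn_iteratedFDeriv hu (mod_cast hi)
  have hsum (i : ℕ) (hi : i ∈ range (n + 1)) :
      IntegrableOn (fun v => ‖iteratedFDeriv ℝ i u (z + v)‖) (closedBall 0 r) μ :=
    ((hD i (mem_range.1 hi).le).comp (by fun_prop) fun v hv => by
      simpa using add_smul_mem_closedBall (z := z) ⟨zero_le_one, le_rfl⟩ hv).norm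
        |>.integrableOn_compact (isCompact_closedBall 0 r)
  have hrem : IntegrableOn (fun v => ∫ s in (0 : ℝ)..1,
      s ^ n * ‖iteratedFDeriv ℝ (n + 1) u (z + s • v)‖) (closedBall 0 r) μ := by
    simp only [intervalIntegral.integral_of_le zero_le_one]
    exact (integrable_prod_pow_mul_norm_comp_add_smul (hD _ le_rfl) n).integral_prod_left
  rw [← integral_finsetSum _ hsum, ← integral_add (integrable_finsetSum _ hsum) hrem,
    ← integral_const_mul, ← smul_eq_mul, ← setIntegral_const]
  exact setIntegral_mono_on
    (integrableOn_const (isCompact_closedBall 0 r).measure_lt_top.ne)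
    (((integrable_finsetSum _ hsum).add hrem).const_mul _) measurableSet_closedBall
    fun v hv => norm_le_sum_norm_iteratedFDeriv_add_integral hv hu

/-- The Sobolev embedding `H^{n+1} ⊂ L^∞` for `n + 1 > (dim E) / 2`. -/
theorem exists_norm_le_sum_lpNorm_iteratedFDeriv [NormedSpace ℝ F] [CompleteSpace F] (μ : Measure E)
    [μ.IsAddHaarMeasure] {n : ℕ} (hn : finrank ℝ E < 2 * (n + 1)) (hr : 0 < r) :
    ∃ C : ℝ, ∀ (u : E → F) (z : E), (∀ y ∈ closedBall z r, ContDiffAt ℝ (n + 1) u y) →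
      ‖u z‖ ≤ C * ∑ i ∈ range (n + 2),
        lpNorm (iteratedFDeriv ℝ i u) 2 (μ.restrict (closedBall z r)) := by
  set V := μ.real (closedBall (0 : E) r)
  set κ := (n - finrank ℝ E / 2 + 1 : ℝ)⁻¹
  have hV : 0 < V := ENNReal.toReal_pos (measure_closedBall_pos μ 0 hr).ne'
    (isCompact_closedBall 0 r).measure_lt_top.ne
  have hκ : 0 ≤ κ := by
    have : (finrank ℝ E : ℝ) < 2 * (n + 1) := mod_cast hn
    exact inv_nonneg.2 (by linarith)
  refine ⟨V⁻¹ * ((1 + r) ^ (n + 1) * ((1 + κ) * √V)), fun u z hu => ?_⟩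
  have hD (i : ℕ) (hi : i ≤ n + 1) : ContinuousOn (iteratedFDeriv ℝ i u) (closedBall z r) :=
    continuousOn_iteratedFDeriv hu (mod_cast hi)
  set N : ℕ → ℝ := fun i => lpNorm (iteratedFDeriv ℝ i u) 2 (μ.restrict (closedBall z r))
  have lower_le (i : ℕ) (hi : i ∈ range (n + 1)) :
      ∫ v in closedBall 0 r, ‖iteratedFDeriv ℝ i u (z + v)‖ ∂μ ≤ √V * N i := by
    simpa using setIntegral_norm_comp_add_smul_le_lpNorm (μ := μ) hr.le
      (hD i (mem_range.1 hi).le) ⟨zero_lt_one, le_rfl⟩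
  have sum_le : ∑ i ∈ range (n + 1), √V * N i + κ * (√V * N (n + 1)) ≤
      (1 + κ) * √V * ∑ i ∈ range (n + 2), N i := by
    rw [← mul_sum, sum_range_succ _ (n + 1)]
    have : 0 ≤ κ * (√V * ∑ i ∈ range (n + 1), N i) :=
      mul_nonneg hκ (mul_nonneg V.sqrt_nonneg (sum_nonneg fun i _ => lpNorm_nonneg))
    have : 0 ≤ √V * N (n + 1) := mul_nonneg V.sqrt_nonneg lpNorm_nonneg
    linarith
  rw [mul_assoc, le_inv_mul_iff₀ hV, mul_assoc]
  refine (measureReal_mul_norm_le_sum_integral hu).trans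
    (mul_le_mul_of_nonneg_left ?_ (by positivity))
  exact (add_le_add (Finset.sum_le_sum lower_le)
    (setIntegral_integral_pow_mul_norm_le_lpNorm hn hr.le (hD _ le_rfl))).trans sum_le

end SobolevEmbedding

section Radius

theorem rad_sq (y : Sp) : rad y ^ 2 = ∑ i, y i ^ 2 :=
  Real.sq_sqrt (sum_nonneg fun i _ => sq_nonneg (y i))

theorem rad_eq_norm_toLp (y : Sp) : rad y = ‖WithLp.toLp 2 y‖ := by
  simp only [rad, EuclideanSpace.norm_eq, Real.norm_eq_abs, sq_abs]

theorem rad_nonneg (y : Sp) : 0 ≤ rad y := Real.sqrt_nonneg _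

theorem rad_pos {y : Sp} : 0 < rad y ↔ y ≠ 0 := by
  rw [rad_eq_norm_toLp, norm_pos_iff, Ne, WithLp.toLp_eq_zero]

theorem rad_smul (t : ℝ) (y : Sp) : rad (t • y) = |t| * rad y := by
  rw [rad_eq_norm_toLp, WithLp.toLp_smul, norm_smul, Real.norm_eq_abs, rad_eq_norm_toLp]

theorem abs_rad_sub_rad_le (y z : Sp) : |rad y - rad z| ≤ rad (y - z) := by
  simp only [rad_eq_norm_toLp, WithLp.toLp_sub]
  exact abs_norm_sub_norm_le _ _

theorem norm_le_rad (y : Sp) : ‖y‖ ≤ rad y := by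
  rw [rad_eq_norm_toLp]
  exact (pi_norm_le_iff_of_nonneg (norm_nonneg _)).2 fun i => PiLp.norm_apply_le (WithLp.toLp 2 y) i

theorem rad_le_two_mul_norm (y : Sp) : rad y ≤ 2 * ‖y‖ := by
  refine Real.sqrt_le_iff.2 ⟨by positivity, ?_⟩
  calc ∑ i, y i ^ 2 ≤ ∑ _i : Fin 3, ‖y‖ ^ 2 :=
        sum_le_sum fun i _ => sq_le_sq' (neg_le_of_abs_le (norm_le_pi_norm y i))
          (le_of_abs_le (norm_le_pi_norm y i))
    _ = 3 * ‖y‖ ^ 2 := by simp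
    _ ≤ (2 * ‖y‖) ^ 2 := by nlinarith [sq_nonneg ‖y‖]

theorem continuous_rad : Continuous rad := by
  unfold rad
  fun_prop

theorem contDiffAt_rad {y : Sp} (hy : y ≠ 0) {n : WithTop ℕ∞} : ContDiffAt ℝ n rad y :=
  ContDiffAt.sqrt (by fun_prop) (rad_sq y ▸ (pow_pos (rad_pos.2 hy) 2).ne')

/-- The linear form `v ↦ z · v`. -/
def dotL (z : Sp) : Sp →L[ℝ] ℝ := ∑ i, z i • ContinuousLinearMap.proj i

theorem dotL_apply (z v : Sp) : dotL z v = ∑ i, z i * v i := by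
  simp [dotL]

theorem dotL_smul (t : ℝ) (z : Sp) : dotL (t • z) = t • dotL z := by
  simp only [dotL, Pi.smul_apply, smul_eq_mul, mul_smul, smul_sum]

theorem dotL_self (y : Sp) : dotL y y = rad y ^ 2 := by
  rw [dotL_apply, rad_sq]
  exact sum_congr rfl fun i _ => (sq (y i)).symm

@[fun_prop]
theorem contDiff_dotL {n : WithTop ℕ∞} : ContDiff ℝ n dotL := by
  unfold dotL
  fun_prop

theorem hasFDerivAt_rad {y : Sp} (hy : y ≠ 0) :
    HasFDerivAt rad (dotL ((rad y)⁻¹ • y)) y := by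
  have hsq : HasFDerivAt (fun z : Sp => ∑ i, z i ^ 2) ((2 : ℝ) • dotL y) y := by
    refine (HasFDerivAt.fun_sum fun i _ => (hasFDerivAt_apply i y).pow 2).congr_fderiv ?_
    ext v
    simp [dotL_apply, mul_sum, mul_assoc]
  refine (hsq.sqrt (rad_sq y ▸ (pow_pos (rad_pos.2 hy) 2).ne')).congr_fderiv ?_
  rw [dotL_smul, smul_smul, ← rad_sq, Real.sqrt_sq (rad_nonneg y)]
  congr 1
  field_simp

theorem hasFDerivAt_comp_rad_smul {y : Sp} (hy : y ≠ 0) {φ : ℝ → ℝ} {φ' : ℝ}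
    (hφ : HasDerivAt φ φ' (rad y)) :
    HasFDerivAt (fun z => φ (rad z) • z)
      (φ (rad y) • .id ℝ Sp + (φ' • dotL ((rad y)⁻¹ • y)).smulRight y) y :=
  (hφ.comp_hasFDerivAt y (hasFDerivAt_rad hy)).smul (hasFDerivAt_id y)

end Radius

section Frame

/-- The infinitesimal rotations: the matrix `rotGen k` generates the field `Rot3 k`. -/
def rotGen : Fin 3 → Sp →L[ℝ] Sp :=
  ![.pi ![-.proj 1, .proj 0, 0], .pi ![-.proj 2, 0, .proj 0], .pi ![0, -.proj 2, .proj 1]]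

theorem dotL_self_rotGen (k : Fin 3) (y : Sp) : dotL y (rotGen k y) = 0 := by
  fin_cases k <;> simp [dotL_apply, rotGen, Fin.sum_univ_three] <;> ring

theorem dotL_smul_add_sum_dotL_rotGen_smul (y v : Sp) :
    dotL y v • y + ∑ k, dotL (rotGen k y) v • rotGen k y = rad y ^ 2 • v := by
  ext i
  fin_cases i <;> simp [dotL_apply, rotGen, Fin.sum_univ_three, rad_sq] <;> ring

/-- The vector fields `∂_r` (index `none`) and `Ω_k` (index `some k`). -/
def frame : Option (Fin 3) → Sp → Sp
  | none, y => (rad y)⁻¹ • y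
  | some k, y => rotGen k y

/-- One-forms `θ_o` with `v = Σ_o θ_o(v) X_o`, where `X_o` is `frame o`. -/
def coframe : Option (Fin 3) → Sp → Sp →L[ℝ] ℝ
  | none, y => dotL ((rad y)⁻¹ • y)
  | some k, y => dotL ((rad y ^ 2)⁻¹ • rotGen k y)

theorem sum_coframe_smul_frame {y : Sp} (hy : y ≠ 0) (v : Sp) :
    ∑ o, coframe o y v • frame o y = v := by
  have hρ : rad y ^ 2 ≠ 0 := (pow_pos (rad_pos.2 hy) 2).ne'
  refine Eq.trans ?_ (inv_smul_smul₀ hρ v)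
  rw [← dotL_smul_add_sum_dotL_rotGen_smul, smul_add, smul_sum, Fintype.sum_option]
  simp only [coframe, frame, dotL_smul, smul_apply, smul_smul, smul_eq_mul, sq,
    mul_inv]
  congr 2
  ring

theorem contDiffAt_frame (o : Option (Fin 3)) {y : Sp} (hy : y ≠ 0) {n : WithTop ℕ∞} :
    ContDiffAt ℝ n (frame o) y := by
  cases o with
  | none => exact ((contDiffAt_rad hy).inv (rad_pos.2 hy).ne').smul contDiffAt_id
  | some k => exact (rotGen k).contDiff.contDiffAt

theorem contDiffAt_coframe (o : Option (Fin 3)) {y : Sp} (hy : y ≠ 0) {n : WithTop ℕ∞} :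
    ContDiffAt ℝ n (coframe o) y := by
  have hρ := rad_pos.2 hy
  cases o with
  | none =>
    exact contDiff_dotL.contDiffAt.comp y
      (((contDiffAt_rad hy).inv hρ.ne').smul contDiffAt_id)
  | some k =>
    exact contDiff_dotL.contDiffAt.comp y
      ((((contDiffAt_rad hy).pow 2).inv (pow_pos hρ 2).ne').smul (rotGen k).contDiff.contDiffAt)

/-- The derivative along `frame o`, which is `∂_r` or one of the `Ω_k`. -/
def frameDeriv (o : Option (Fin 3)) (g : Sp → ℝ) (y : Sp) : ℝ := fderiv ℝ g y (frame o y)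

theorem fderiv_apply_eq_sum_pd3 (g : Sp → ℝ) (y v : Sp) :
    fderiv ℝ g y v = ∑ i, v i * pd3 i g y := by
  conv_lhs => rw [← Finset.univ_sum_single v, map_sum]
  refine sum_congr rfl fun i _ => ?_
  rw [pd3, ← smul_eq_mul, ← map_smul, ← Pi.single_smul, smul_eq_mul, mul_one]

theorem radDeriv_eq_frameDeriv : radDeriv = frameDeriv none := by
  funext g y
  simp only [radDeriv, frameDeriv, frame, fderiv_apply_eq_sum_pd3, Pi.smul_apply, smul_eq_mul,
    div_eq_inv_mul]

theorem rot3_eq_frameDeriv (k : Fin 3) : Rot3 k = frameDeriv (some k) := by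
  funext g y
  fin_cases k <;>
    simp [Rot3, frameDeriv, frame, rotGen, fderiv_apply_eq_sum_pd3, Fin.sum_univ_three] <;> ring

theorem fderiv_eq_sum_frameDeriv_smul_coframe (g : Sp → ℝ) {y : Sp} (hy : y ≠ 0) :
    fderiv ℝ g y = ∑ o, frameDeriv o g y • coframe o y := by
  ext1 v
  conv_lhs => rw [← sum_coframe_smul_frame hy v, map_sum]
  simp [frameDeriv, mul_comm]

theorem contDiffAt_frameDeriv (o : Option (Fin 3)) {g : Sp → ℝ} {y : Sp} (hy : y ≠ 0)
    {m n : WithTop ℕ∞} (hg : ContDiffAt ℝ n g y) (hmn : m + 1 ≤ n) :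
    ContDiffAt ℝ m (frameDeriv o g) y :=
  (hg.fderiv_right hmn).clm_apply (contDiffAt_frame o hy)

theorem lieBracket_frame_none_some (k : Fin 3) {y : Sp} (hy : y ≠ 0) :
    VectorField.lieBracket ℝ (frame none) (frame (some k)) y = 0 := by
  have hrad : HasFDerivAt (frame none) _ y :=
    hasFDerivAt_comp_rad_smul hy (hasDerivAt_inv (rad_pos.2 hy).ne')
  have hrot : HasFDerivAt (frame (some k)) (rotGen k) y := (rotGen k).hasFDerivAt
  simp [VectorField.lieBracket, hrad.fderiv, hrot.fderiv, frame, dotL_smul, dotL_self_rotGen]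

theorem frameDeriv_none_frameDeriv_some (k : Fin 3) {g : Sp → ℝ} {y : Sp} (hy : y ≠ 0)
    (hg : ContDiffAt ℝ 2 g y) :
    frameDeriv none (frameDeriv (some k) g) y = frameDeriv (some k) (frameDeriv none g) y := by
  have h := VectorField.fderiv_apply_lieBracket (V := frame none) (W := frame (some k)) hg
    (by simp) ((contDiffAt_frame _ hy (n := 1)).differentiableAt one_ne_zero)
     ((contDiffAt_frame _ hy (n := 1)).differentiableAt one_ne_zero)
  rw [lieBracket_frame_none_some k hy, map_zero] at h
  exact (sub_eq_zero.1 h.symm)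

end Frame

section Calculus

variable {ι E F : Type*} [Fintype ι] [NormedAddCommGroup E] [NormedSpace ℝ E]
  [NormedAddCommGroup F] [NormedSpace ℝ F] {y : E}

theorem continuousAt_norm_fderiv {f : E → F} (hf : ContDiffAt ℝ 1 f y) :
    ContinuousAt (fun x => ‖fderiv ℝ f x‖) y :=
  (hf.fderiv_right (m := 0) le_rfl).continuousAt.norm

theorem norm_fderiv_sum_smul_le {a : ι → E → ℝ} {θ : ι → E → F}
    (ha : ∀ i, DifferentiableAt ℝ (a i) y) (hθ : ∀ i, DifferentiableAt ℝ (θ i) y) :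
    ‖fderiv ℝ (fun x => ∑ i, a i x • θ i x) y‖ ≤
      ∑ i, (‖fderiv ℝ (a i) y‖ * ‖θ i y‖ + |a i y| * ‖fderiv ℝ (θ i) y‖) := by
  rw [fderiv_fun_sum fun i _ => (ha i).fun_smul (hθ i)]
  refine norm_sum_le_of_le _ fun i _ => ?_
  rw [fderiv_fun_smul (ha i) (hθ i), add_comm]
  exact (norm_add_le _ _).trans (add_le_add (ContinuousLinearMap.norm_smulRight_apply _ _).le
    (norm_smul _ _).le)

end Calculus

section MixedDerivatives

/-- Indices `⟨m, j, α⟩` of the derivatives `Ω^α ∂_r^j`, where `m = |α|`. -/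
abbrev DerivIndex : Type := Σ m : ℕ, ℕ × (Fin m → Fin 3)

/-- The indices of the derivatives `Ω^α ∂_r^j` with `|α| + j ≤ 2`. -/
def orderLETwo : Finset (DerivIndex) :=
  (range 3).sigma fun m => range (3 - m) ×ˢ univ

/-- The derivative `Ω^α ∂_r^j w` with index `p = ⟨|α|, j, α⟩`. -/
def mixedDeriv (p : DerivIndex) (w : Sp → ℝ) : Sp → ℝ :=
  Rot3Comp p.2.2 (radDerivIter p.2.1 w)

theorem mem_orderLETwo {p : DerivIndex} :
    p ∈ orderLETwo ↔ p.1 + p.2.1 ≤ 2 := by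
  simp only [orderLETwo, mem_sigma, mem_range, mem_product, mem_univ, and_true]
  lia

theorem sum_orderLETwo {M : Type*} [AddCommMonoid M] (f : DerivIndex → M) :
    ∑ p ∈ orderLETwo, f p =
      ∑ m ∈ range 3, ∑ j ∈ range (3 - m), ∑ α : Fin m → Fin 3, f ⟨m, j, α⟩ := by
  simp only [orderLETwo, sum_sigma, sum_product]

theorem contDiffAt_radDerivIter {n : ℕ} {g : Sp → ℝ} {y : Sp} (hy : y ≠ 0) (j : ℕ)
    (hg : ContDiffAt ℝ (n + j : ℕ) g y) : ContDiffAt ℝ n (radDerivIter j g) y := by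
  induction j generalizing n with
  | zero => exact hg
  | succ j ih =>
    rw [radDerivIter, radDeriv_eq_frameDeriv]
    exact contDiffAt_frameDeriv none hy (ih (n := n + 1) (Nat.add_right_comm n 1 j ▸ hg)) le_rfl

theorem contDiffAt_rot3Comp {m n : ℕ} (α : Fin m → Fin 3) {g : Sp → ℝ} {y : Sp} (hy : y ≠ 0)
    (hg : ContDiffAt ℝ (n + m : ℕ) g y) : ContDiffAt ℝ n (Rot3Comp α g) y := by
  induction m generalizing n with
  | zero => exact hg
  | succ m ih =>
    rw [Rot3Comp, rot3_eq_frameDeriv]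
    exact contDiffAt_frameDeriv _ hy (ih _ (n := n + 1) (Nat.add_right_comm n 1 m ▸ hg)) le_rfl

theorem continuousAt_mixedDeriv {p : DerivIndex} (hp : p ∈ orderLETwo)
    {g : Sp → ℝ} {y : Sp} (hy : y ≠ 0) (hg : ContDiffAt ℝ 2 g y) :
    ContinuousAt (mixedDeriv p g) y :=
  (contDiffAt_rot3Comp p.2.2 (n := 0) hy (contDiffAt_radDerivIter hy p.2.1
    (hg.of_le (by have := mem_orderLETwo.1 hp; norm_cast; lia)))).continuousAt

variable {u : Sp → ℝ} {y : Sp}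

theorem abs_mixedDeriv_le_sum {p : DerivIndex} (hp : p ∈ orderLETwo) :
    |mixedDeriv p u y| ≤ ∑ q ∈ orderLETwo, |mixedDeriv q u y| :=
  single_le_sum (f := fun q => |mixedDeriv q u y|) (fun _ _ => abs_nonneg _) hp

theorem abs_le_sum_abs_mixedDeriv : |u y| ≤ ∑ p ∈ orderLETwo, |mixedDeriv p u y| :=
  abs_mixedDeriv_le_sum (p := ⟨0, 0, ![]⟩) (mem_orderLETwo.2 (by simp))

theorem abs_frameDeriv_le_sum_abs_mixedDeriv (o : Option (Fin 3)) :
    |frameDeriv o u y| ≤ ∑ p ∈ orderLETwo, |mixedDeriv p u y| := by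
  cases o with
  | none =>
    rw [← radDeriv_eq_frameDeriv]
    exact abs_mixedDeriv_le_sum (p := ⟨0, 1, ![]⟩) (mem_orderLETwo.2 (by simp))
  | some k =>
    rw [← rot3_eq_frameDeriv]
    exact abs_mixedDeriv_le_sum (p := ⟨1, 0, ![k]⟩) (mem_orderLETwo.2 (by simp))

theorem abs_frameDeriv_frameDeriv_le_sum_abs_mixedDeriv (hy : y ≠ 0) (hu : ContDiffAt ℝ 2 u y)
    (o o' : Option (Fin 3)) :
    |frameDeriv o (frameDeriv o' u) y| ≤ ∑ p ∈ orderLETwo, |mixedDeriv p u y| := by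
  have some_none (k : Fin 3) : |frameDeriv (some k) (frameDeriv none u) y| ≤
      ∑ p ∈ orderLETwo, |mixedDeriv p u y| := by
    rw [← radDeriv_eq_frameDeriv, ← rot3_eq_frameDeriv]
    exact abs_mixedDeriv_le_sum (p := ⟨1, 1, ![k]⟩) (mem_orderLETwo.2 (by simp))
  match o, o' with
  | none, none =>
    rw [← radDeriv_eq_frameDeriv]
    exact abs_mixedDeriv_le_sum (p := ⟨0, 2, ![]⟩) (mem_orderLETwo.2 (by simp))
  | some k, none => exact some_none k
  | none, some k =>
    rw [frameDeriv_none_frameDeriv_some k hy hu]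
    exact some_none k
  | some k, some l =>
    rw [← rot3_eq_frameDeriv, ← rot3_eq_frameDeriv]
    exact abs_mixedDeriv_le_sum (p := ⟨2, 0, ![k, l]⟩) (mem_orderLETwo.2 (by simp))

theorem norm_fderiv_le_sum_frameDeriv (hy : y ≠ 0) :
    ‖fderiv ℝ u y‖ ≤ ∑ o, |frameDeriv o u y| * ‖coframe o y‖ := by
  rw [fderiv_eq_sum_frameDeriv_smul_coframe u hy]
  exact (norm_sum_le _ _).trans_eq (sum_congr rfl fun o _ => norm_smul _ _)

theorem norm_fderiv_fderiv_le_sum_frameDeriv (hy : y ≠ 0) (hu : ContDiffAt ℝ 2 u y) :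
    ‖fderiv ℝ (fderiv ℝ u) y‖ ≤ ∑ o, (‖fderiv ℝ (frameDeriv o u) y‖ * ‖coframe o y‖ +
      |frameDeriv o u y| * ‖fderiv ℝ (coframe o) y‖) := by
  have heq : fderiv ℝ u =ᶠ[nhds y] fun x => ∑ o, frameDeriv o u x • coframe o x :=
    (isOpen_ne.eventually_mem hy).mono fun x hx => fderiv_eq_sum_frameDeriv_smul_coframe u hx
  have hX (o : Option (Fin 3)) : DifferentiableAt ℝ (frameDeriv o u) y :=
    (contDiffAt_frameDeriv o hy hu (m := 1) (by norm_num)).differentiableAt one_ne_zero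
  have hθ (o : Option (Fin 3)) : DifferentiableAt ℝ (coframe o) y :=
    (contDiffAt_coframe o hy (n := 1)).differentiableAt one_ne_zero
  rw [heq.fderiv_eq]
  exact norm_fderiv_sum_smul_le hX hθ

/-- The constant comparing derivatives of order at most two at `y` with iterated derivatives along
`frame`. -/
def frameConst (y : Sp) : ℝ :=
  1 + ∑ o, ‖coframe o y‖ + ((∑ o, ‖coframe o y‖) ^ 2 + ∑ o, ‖fderiv ℝ (coframe o) y‖)

theorem continuousAt_frameConst (hy : y ≠ 0) : ContinuousAt frameConst y := by
  have hθ (o : Option (Fin 3)) : ContinuousAt (coframe o) y :=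
    (contDiffAt_coframe o hy (n := 0)).continuousAt
  have hA : ContinuousAt (fun y => ∑ o, ‖coframe o y‖) y :=
    tendsto_finsetSum _ fun o _ => (hθ o).norm
  have hB : ContinuousAt (fun y => ∑ o, ‖fderiv ℝ (coframe o) y‖) y :=
    tendsto_finsetSum _ fun o _ => continuousAt_norm_fderiv (contDiffAt_coframe o hy)
  exact (continuousAt_const.add hA).add ((hA.pow 2).add hB)

theorem norm_iteratedFDeriv_le_frameConst_mul (hy : y ≠ 0) (hu : ContDiffAt ℝ 2 u y) {i : ℕ}
    (hi : i ∈ range 3) :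
    ‖iteratedFDeriv ℝ i u y‖ ≤ frameConst y * ∑ p ∈ orderLETwo, |mixedDeriv p u y| := by
  set S := ∑ p ∈ orderLETwo, |mixedDeriv p u y|
  set a := ∑ o, ‖coframe o y‖ with ha
  set b := ∑ o, ‖fderiv ℝ (coframe o) y‖
  have ha0 : 0 ≤ a := by positivity
  have hb0 : 0 ≤ b := by positivity
  have hS0 : 0 ≤ S := by positivity
  have fderiv_le {g : Sp → ℝ} (hg : ∀ o, |frameDeriv o g y| ≤ S) : ‖fderiv ℝ g y‖ ≤ S * a := by
    rw [ha, mul_sum]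
    exact (norm_fderiv_le_sum_frameDeriv hy).trans
      (sum_le_sum fun o _ => mul_le_mul_of_nonneg_right (hg o) (norm_nonneg _))
  have order_zero : ‖iteratedFDeriv ℝ 0 u y‖ ≤ S := by
    rw [norm_iteratedFDeriv_zero]
    exact abs_le_sum_abs_mixedDeriv
  have order_one : ‖iteratedFDeriv ℝ 1 u y‖ ≤ S * a := by
    rw [norm_iteratedFDeriv_one]
    exact fderiv_le abs_frameDeriv_le_sum_abs_mixedDeriv
  have order_two : ‖iteratedFDeriv ℝ 2 u y‖ ≤ S * a * a + S * b := by
    rw [← norm_iteratedFDeriv_fderiv, norm_iteratedFDeriv_one]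
    have hsum : S * a * a + S * b =
        ∑ o, (S * a * ‖coframe o y‖ + S * ‖fderiv ℝ (coframe o) y‖) := by
      rw [sum_add_distrib, ← mul_sum, ← mul_sum]
    rw [hsum]
    refine (norm_fderiv_fderiv_le_sum_frameDeriv hy hu).trans (sum_le_sum fun o _ => ?_)
    gcongr
    · exact fderiv_le fun o' => abs_frameDeriv_frameDeriv_le_sum_abs_mixedDeriv hy hu o' o
    · exact abs_frameDeriv_le_sum_abs_mixedDeriv o
  have hconst : frameConst y * S = S + S * a + (S * a * a + S * b) := by
    rw [frameConst]
    ring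
  rw [hconst]
  have hSa : 0 ≤ S * a := mul_nonneg hS0 ha0
  have hSaa : 0 ≤ S * a * a := mul_nonneg hSa ha0
  have hSb : 0 ≤ S * b := mul_nonneg hS0 hb0
  rw [mem_range] at hi
  interval_cases i <;> linarith

end MixedDerivatives

section Shell

/-- The spherical shell `||y| - R| ≤ 1`. -/
def shell (R : ℝ) : Set Sp := {y | |rad y - R| ≤ 1}

/-- The `L²` norm over `shell R` with respect to the measure `|y|⁻² dy`. -/
def shellNorm (R : ℝ) (g : Sp → ℝ) : ℝ := √(∫ y in shell R, g y ^ 2 / rad y ^ 2)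

variable {R : ℝ} {y : Sp}

theorem mem_shell : y ∈ shell R ↔ R - 1 ≤ rad y ∧ rad y ≤ R + 1 := by
  rw [shell, Set.mem_ofPred_eq, abs_sub_le_iff]
  constructor <;> rintro ⟨h₁, h₂⟩ <;> constructor <;> linarith

theorem isCompact_shell (R : ℝ) : IsCompact (shell R) := by
  refine Metric.isCompact_of_isClosed_isBounded
    (isClosed_le (continuous_rad.sub continuous_const).abs continuous_const)
    ((Metric.isBounded_closedBall (x := (0 : Sp)) (r := R + 1)).subset fun y hy => ?_)
  rw [mem_closedBall_zero_iff]
  exact (norm_le_rad y).trans (mem_shell.1 hy).2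

theorem rad_pos_of_mem_shell (hR : 1 < R) (hy : y ∈ shell R) : 0 < rad y := by
  linarith [(mem_shell.1 hy).1]

theorem closedBall_subset_shell (y : Sp) : Metric.closedBall y (1 / 2) ⊆ shell (rad y) :=
  fun z hz => calc
    |rad z - rad y| ≤ rad (z - y) := abs_rad_sub_rad_le z y
    _ ≤ 2 * ‖z - y‖ := rad_le_two_mul_norm _
    _ ≤ 1 := by linarith [mem_closedBall_iff_norm.1 hz]

theorem lpNorm_restrict_shell_le (hR : 1 < R) {g : Sp → ℝ} (hg : ContinuousOn g (shell R)) :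
    lpNorm g 2 (volume.restrict (shell R)) ≤ (R + 1) * shellNorm R g := by
  have hK := isCompact_shell R
  rw [lpNorm_two_eq_sqrt_integral (hg.aestronglyMeasurable hK.measurableSet), shellNorm,
    ← Real.sqrt_sq (show 0 ≤ R + 1 by linarith), ← Real.sqrt_mul (sq_nonneg _),
    ← integral_const_mul]
  have hquot : ContinuousOn (fun y => g y ^ 2 / rad y ^ 2) (shell R) :=
    (hg.pow 2).div (continuous_rad.pow 2).continuousOn
      fun y hy => (pow_pos (rad_pos_of_mem_shell hR hy) 2).ne'
  refine Real.sqrt_le_sqrt (setIntegral_mono_on ((hg.norm.pow 2).integrableOn_compact hK)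
    ((hquot.integrableOn_compact hK).const_mul _) hK.measurableSet fun y hy => ?_)
  have hy0 := rad_pos_of_mem_shell hR hy
  have hle : rad y ≤ R + 1 := (mem_shell.1 hy).2
  rw [Real.norm_eq_abs, sq_abs, mul_div_left_comm]
  exact le_mul_of_one_le_right (sq_nonneg _) ((one_le_div (pow_pos hy0 2)).2 (by gcongr))

theorem lpNorm_iteratedFDeriv_restrict_shell_le (hR : 1 < R) {M : ℝ}
    (hM : ∀ y ∈ shell R, frameConst y ≤ M) {u : Sp → ℝ} (hu : ∀ y ∈ shell R, ContDiffAt ℝ 2 u y)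
    {i : ℕ} (hi : i ∈ range 3) :
    lpNorm (iteratedFDeriv ℝ i u) 2 (volume.restrict (shell R)) ≤
      |M| * (R + 1) * ∑ p ∈ orderLETwo, shellNorm R (mixedDeriv p u) := by
  have hK := isCompact_shell R
  have hne {y : Sp} (hy : y ∈ shell R) : y ≠ 0 := rad_pos.1 (rad_pos_of_mem_shell hR hy)
  have hcont {p} (hp : p ∈ orderLETwo) : ContinuousOn (mixedDeriv p u) (shell R) := fun y hy =>
    (continuousAt_mixedDeriv hp (hne hy) (hu y hy)).continuousWithinAt
  have hmem {p} (hp : p ∈ orderLETwo) :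
      MemLp (fun y => |mixedDeriv p u y|) 2 (volume.restrict (shell R)) :=
    memLp_restrict_of_continuousOn_isCompact (hcont hp).abs hK
  have hle : ∀ᵐ y ∂volume.restrict (shell R),
      ‖iteratedFDeriv ℝ i u y‖ ≤ |M| * ∑ p ∈ orderLETwo, |mixedDeriv p u y| :=
    (ae_restrict_mem hK.measurableSet).mono fun y hy =>
      (norm_iteratedFDeriv_le_frameConst_mul (hne hy) (hu y hy) hi).trans
        (mul_le_mul_of_nonneg_right ((hM y hy).trans (le_abs_self M)) (by positivity))
  calc lpNorm (iteratedFDeriv ℝ i u) 2 (volume.restrict (shell R))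
      ≤ lpNorm (|M| • fun y => ∑ p ∈ orderLETwo, |mixedDeriv p u y|) 2
          (volume.restrict (shell R)) :=
        lpNorm_mono_ae_real ((memLp_finsetSum _ fun p hp => hmem hp).const_smul _) hle
    _ ≤ |M| * ∑ p ∈ orderLETwo, (R + 1) * shellNorm R (mixedDeriv p u) := by
        rw [lpNorm_const_smul, coe_nnnorm, Real.norm_eq_abs, abs_abs, ← Finset.sum_fn]
        refine mul_le_mul_of_nonneg_left ?_ (abs_nonneg M)
        refine (lpNorm_sum_le (fun p hp => hmem hp) one_le_two).trans (sum_le_sum fun p hp => ?_)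
        rw [lpNorm_fun_abs ((hcont hp).aestronglyMeasurable hK.measurableSet)]
        exact lpNorm_restrict_shell_le hR (hcont hp)
    _ = |M| * (R + 1) * ∑ p ∈ orderLETwo, shellNorm R (mixedDeriv p u) := by
        rw [← mul_sum, mul_assoc]

theorem exists_abs_le_sum_shellNorm_mixedDeriv (hR : 1 < R) :
    ∃ C : ℝ, 0 < C ∧ ∀ (u : Sp → ℝ) (z : Sp), rad z = R → (∀ y ∈ shell R, ContDiffAt ℝ 2 u y) →
      |u z| ≤ C * ∑ p ∈ orderLETwo, shellNorm R (mixedDeriv p u) := by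
  obtain ⟨M, hM⟩ := (isCompact_shell R).exists_bound_of_continuousOn fun y hy =>
    (continuousAt_frameConst (rad_pos.1 (rad_pos_of_mem_shell hR hy))).continuousWithinAt
  obtain ⟨C, hC⟩ := exists_norm_le_sum_lpNorm_iteratedFDeriv (E := Sp) (F := ℝ) volume (n := 1)
    (by simp) one_half_pos
  refine ⟨|C| * (3 * (|M| * (R + 1))) + 1, by positivity, fun u z hz hu => ?_⟩
  subst hz
  have hball := closedBall_subset_shell z
  set S := ∑ p ∈ orderLETwo, shellNorm (rad z) (mixedDeriv p u)
  have hS : 0 ≤ S := sum_nonneg fun p _ => Real.sqrt_nonneg _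
  have hlp : ∀ i ∈ range 3, lpNorm (iteratedFDeriv ℝ i u) 2
      (volume.restrict (Metric.closedBall z (1 / 2))) ≤ |M| * (rad z + 1) * S := by
    intro i hi
    have hi2 : (i : WithTop ℕ∞) ≤ 2 := mod_cast Nat.lt_succ_iff.1 (mem_range.1 hi)
    have hmem : MemLp (iteratedFDeriv ℝ i u) 2 (volume.restrict (shell (rad z))) :=
      memLp_restrict_of_continuousOn_isCompact (continuousOn_iteratedFDeriv hu hi2)
        (isCompact_shell _)
    exact (lpNorm_mono_measure hmem (Measure.restrict_mono_set _ hball)).trans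
      (lpNorm_iteratedFDeriv_restrict_shell_le hR (fun y hy => le_of_abs_le (hM y hy)) hu hi)
  calc |u z| ≤ C * ∑ i ∈ range 3, lpNorm (iteratedFDeriv ℝ i u) 2
        (volume.restrict (Metric.closedBall z (1 / 2))) := hC u z fun y hy => hu y (hball hy)
    _ ≤ |C| * ∑ _i ∈ range 3, |M| * (rad z + 1) * S := by
      gcongr with i hi
      · exact sum_nonneg fun i _ => lpNorm_nonneg
      · exact le_abs_self C
      · exact hlp i hi
    _ = |C| * (3 * (|M| * (rad z + 1))) * S := by
      rw [sum_const, card_range, nsmul_eq_mul]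
      push_cast
      ring
    _ ≤ (|C| * (3 * (|M| * (rad z + 1))) + 1) * S := by gcongr; linarith

end Shell

section RadialShift

/-- The map `ρω ↦ (ρ + c)ω` in polar coordinates. -/
def radialShift (c : ℝ) (y : Sp) : Sp := (1 + c / rad y) • y

/-- The open set on which `radialShift c` stays on the same side of the origin. -/
def radialShiftSource (c : ℝ) : Set Sp := {y | 0 < rad y ∧ 0 < rad y + c}

/-- The derivative of `radialShift c` at `y ≠ 0`. -/
def radialShiftDeriv (c : ℝ) (y : Sp) : Sp →L[ℝ] Sp :=
  (1 + c / rad y) • .id ℝ Sp + (-(c / rad y ^ 2) • dotL ((rad y)⁻¹ • y)).smulRight y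

variable {c : ℝ} {y : Sp}

theorem isOpen_radialShiftSource (c : ℝ) : IsOpen (radialShiftSource c) :=
  (isOpen_lt continuous_const continuous_rad).inter
    (isOpen_lt continuous_const (continuous_rad.add continuous_const))

theorem ne_zero_of_mem_radialShiftSource (hy : y ∈ radialShiftSource c) : y ≠ 0 :=
  rad_pos.1 hy.1

theorem one_add_div_rad (hy : y ∈ radialShiftSource c) : 1 + c / rad y = (rad y + c) / rad y := by
  rw [add_div, div_self hy.1.ne']

theorem rad_radialShift (hy : y ∈ radialShiftSource c) : rad (radialShift c y) = rad y + c := by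
  have h := hy.1.ne'
  rw [radialShift, rad_smul, one_add_div_rad hy, abs_of_pos (div_pos hy.2 hy.1),
    div_mul_cancel₀ _ h]

theorem radialShift_mem_radialShiftSource_neg (hy : y ∈ radialShiftSource c) :
    radialShift c y ∈ radialShiftSource (-c) := by
  rw [radialShiftSource, Set.mem_ofPred_eq, rad_radialShift hy, add_neg_cancel_right]
  exact hy.symm

theorem radialShift_neg_radialShift (hy : y ∈ radialShiftSource c) :
    radialShift (-c) (radialShift c y) = y := by
  have h := hy.1.ne'
  have hc := hy.2.ne'
  rw [radialShift, rad_radialShift hy, radialShift, smul_smul]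
  convert one_smul ℝ y
  field_simp
  ring

theorem hasFDerivAt_radialShift (c : ℝ) (hy : y ≠ 0) :
    HasFDerivAt (radialShift c) (radialShiftDeriv c y) y := by
  have hφ : HasDerivAt (fun ρ : ℝ => 1 + c / ρ) (-(c / rad y ^ 2)) (rad y) := by
    refine (((hasDerivAt_inv (rad_pos.2 hy).ne').const_mul c).const_add 1).congr_deriv ?_
    ring
  exact hasFDerivAt_comp_rad_smul hy hφ

theorem contDiffAt_radialShift (c : ℝ) (hy : y ≠ 0) {n : WithTop ℕ∞} :
    ContDiffAt ℝ n (radialShift c) y :=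
  (contDiffAt_const.add (contDiffAt_const.div (contDiffAt_rad hy) (rad_pos.2 hy).ne')).smul
    contDiffAt_id

theorem radialShiftDeriv_frame (o : Option (Fin 3)) (hy : y ∈ radialShiftSource c) :
    radialShiftDeriv c y (frame o y) = frame o (radialShift c y) := by
  have h := hy.1.ne'
  have hc := hy.2.ne'
  cases o with
  | none =>
    rw [frame, frame, rad_radialShift hy]
    simp only [radialShift, radialShiftDeriv, dotL_smul, add_apply,
      smul_apply, ContinuousLinearMap.smulRight_apply, ContinuousLinearMap.id_apply, map_smul,
      dotL_self, smul_smul, smul_eq_mul, ← add_smul]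
    congr 1
    field_simp
    ring
  | some k =>
    simp only [frame, radialShift, radialShiftDeriv, dotL_smul, add_apply,
      smul_apply, ContinuousLinearMap.smulRight_apply, ContinuousLinearMap.id_apply, map_smul,
      dotL_self_rotGen, smul_zero, zero_smul, add_zero]

theorem det_radialShiftDeriv (hy : y ∈ radialShiftSource c) :
    (radialShiftDeriv c y).det = (1 + c / rad y) ^ 2 := by
  set a := 1 + c / rad y with ha
  have ha0 : a ≠ 0 := by
    rw [ha, one_add_div_rad hy]
    exact (div_pos hy.2 hy.1).ne'
  set f : Sp →ₗ[ℝ] ℝ := a⁻¹ • -(c / rad y ^ 2) • (dotL ((rad y)⁻¹ • y) : Sp →ₗ[ℝ] ℝ) with hf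
  have hfactor : (radialShiftDeriv c y : Sp →ₗ[ℝ] Sp) = a • LinearMap.transvection f y := by
    refine LinearMap.ext fun v => ?_
    simp [radialShiftDeriv, LinearMap.transvection.apply, hf, smul_smul, mul_assoc, ha0, ← ha]
  have hfy : a * (1 + f y) = 1 := by
    have hρ := hy.1.ne'
    have : a * f y = -(c / rad y) := by
      simp only [hf, dotL_smul, ContinuousLinearMap.toLinearMap_smul, LinearMap.smul_apply,
        ContinuousLinearMap.coe_coe, dotL_self, smul_eq_mul, neg_mul, mul_neg, neg_inj]
      field_simp
    rw [mul_add, this]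
    ring
  rw [ContinuousLinearMap.det, hfactor, LinearMap.det_smul, LinearMap.transvection.det,
    Module.finrank_fin_fun, pow_succ, mul_assoc, hfy, mul_one]

theorem frameDeriv_comp_radialShift (o : Option (Fin 3)) (g : Sp → ℝ)
    (hy : y ∈ radialShiftSource c) :
    frameDeriv o (g ∘ radialShift c) y = frameDeriv o g (radialShift c y) := by
  have hΨ := hasFDerivAt_radialShift c (ne_zero_of_mem_radialShiftSource hy)
  by_cases hg : DifferentiableAt ℝ g (radialShift c y)
  · rw [frameDeriv, (hg.hasFDerivAt.comp y hΨ).fderiv, ContinuousLinearMap.comp_apply,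
      radialShiftDeriv_frame o hy, frameDeriv]
  · have hgΨ : ¬ DifferentiableAt ℝ (g ∘ radialShift c) y := fun h => by
      have hy' := radialShift_mem_radialShiftSource_neg hy
      have hΨ' := hasFDerivAt_radialShift (-c) (ne_zero_of_mem_radialShiftSource hy')
      rw [← radialShift_neg_radialShift hy] at h
      refine hg ((h.comp _ hΨ'.differentiableAt).congr_of_eventuallyEq ?_)
      filter_upwards [(isOpen_radialShiftSource (-c)).mem_nhds hy'] with x hx
      have := radialShift_neg_radialShift hx
      rw [neg_neg] at this
      rw [Function.comp_apply, Function.comp_apply, this]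
    rw [frameDeriv, frameDeriv, fderiv_zero_of_not_differentiableAt hg,
      fderiv_zero_of_not_differentiableAt hgΨ, zero_apply, zero_apply]

theorem eqOn_frameDeriv_comp_radialShift (o : Option (Fin 3)) {f g : Sp → ℝ}
    (h : Set.EqOn f (g ∘ radialShift c) (radialShiftSource c)) :
    Set.EqOn (frameDeriv o f) (frameDeriv o g ∘ radialShift c) (radialShiftSource c) := by
  intro y hy
  have hfg := h.eventuallyEq_of_mem ((isOpen_radialShiftSource c).mem_nhds hy)
  rw [Function.comp_apply, ← frameDeriv_comp_radialShift o g hy, frameDeriv, frameDeriv,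
    hfg.fderiv_eq]

theorem eqOn_mixedDeriv_comp_radialShift (p : DerivIndex) (g : Sp → ℝ) :
    Set.EqOn (mixedDeriv p (g ∘ radialShift c)) (mixedDeriv p g ∘ radialShift c)
      (radialShiftSource c) := by
  have hrad (j : ℕ) : Set.EqOn (radDerivIter j (g ∘ radialShift c))
      (radDerivIter j g ∘ radialShift c) (radialShiftSource c) := by
    induction j with
    | zero => exact Set.eqOn_refl _ _
    | succ j ih =>
      rw [radDerivIter, radDerivIter, radDeriv_eq_frameDeriv]
      exact eqOn_frameDeriv_comp_radialShift none ih
  obtain ⟨m, j, α⟩ := p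
  rw [mixedDeriv, mixedDeriv]
  induction m with
  | zero => exact hrad j
  | succ m ih =>
    rw [Rot3Comp, Rot3Comp, rot3_eq_frameDeriv]
    exact eqOn_frameDeriv_comp_radialShift _ (ih _)

variable {R : ℝ}

theorem shell_subset_radialShiftSource (hR : 1 < R) (hRc : 1 < R + c) :
    shell R ⊆ radialShiftSource c := fun y hy => by
  have h := (mem_shell.1 hy).1
  exact ⟨by linarith, by linarith⟩

theorem mapsTo_radialShift_shell (hR : 1 < R) (hRc : 1 < R + c) :
    Set.MapsTo (radialShift c) (shell R) (shell (R + c)) := fun y hy => by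
  rw [shell, Set.mem_ofPred_eq, rad_radialShift (shell_subset_radialShiftSource hR hRc hy),
    add_sub_add_right_eq_sub]
  exact hy

theorem injOn_radialShift (c : ℝ) : Set.InjOn (radialShift c) (radialShiftSource c) :=
  Set.LeftInvOn.injOn fun _ hy => radialShift_neg_radialShift hy

theorem image_radialShift_shell (hR : 1 < R) (hRc : 1 < R + c) :
    radialShift c '' shell R = shell (R + c) := by
  refine (mapsTo_radialShift_shell hR hRc).image_subset.antisymm fun y hy => ?_
  have hRcc : 1 < R + c + -c := by rwa [add_neg_cancel_right]
  refine ⟨radialShift (-c) y, ?_, ?_⟩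
  · simpa using mapsTo_radialShift_shell hRc hRcc hy
  · simpa using radialShift_neg_radialShift (shell_subset_radialShiftSource hRc hRcc hy)

theorem shellNorm_eq_of_eqOn_comp_radialShift (hR : 1 < R) (hRc : 1 < R + c) {f g : Sp → ℝ}
    (h : Set.EqOn f (g ∘ radialShift c) (radialShiftSource c)) :
    shellNorm R f = shellNorm (R + c) g := by
  have hsub := shell_subset_radialShiftSource hR hRc
  have hmeas := (isCompact_shell R).measurableSet
  rw [shellNorm, shellNorm, ← image_radialShift_shell hR hRc,
    integral_image_eq_integral_abs_det_fderiv_smul volume hmeas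
      (fun y hy => (hasFDerivAt_radialShift c
        (ne_zero_of_mem_radialShiftSource (hsub hy))).hasFDerivWithinAt)
      ((injOn_radialShift c).mono hsub)]
  congr 1
  refine setIntegral_congr_fun hmeas fun y hy => ?_
  have hy' := hsub hy
  have hρ := hy'.1.ne'
  have hρc := hy'.2.ne'
  simp only [det_radialShiftDeriv hy', rad_radialShift hy', h hy', Function.comp_apply, abs_sq,
    one_add_div_rad hy', smul_eq_mul]
  field_simp

end RadialShift

theorem sum_shellNorm_mixedDeriv (R : ℝ) (w : Sp → ℝ) :
    ∑ p ∈ orderLETwo, shellNorm R (mixedDeriv p w) =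
      ∑ m ∈ range 3, ∑ j ∈ range (3 - m), ∑ α : Fin m → Fin 3,
        (∫ y in {y : Sp | |rad y - R| ≤ 1},
          (Rot3Comp α (radDerivIter j w) y) ^ 2 / rad y ^ 2) ^ ((1:ℝ)/2) := by
  simp only [sum_orderLETwo, shellNorm, Real.sqrt_eq_rpow, shell, mixedDeriv]

theorem stmt_19_general {R₀ : ℝ} (hR₀ : 1 < R₀) :
    ∃ C : ℝ, 0 < C ∧
      ∀ (w : Sp → ℝ) (x : Sp), R₀ ≤ rad x → (∀ y ∈ shell (rad x), ContDiffAt ℝ 2 w y) →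
        |w x| ≤ C * ∑ m ∈ range 3, ∑ j ∈ range (3 - m),
          ∑ α : Fin m → Fin 3,
            (∫ y in {y : Sp | |rad y - rad x| ≤ 1},
              (Rot3Comp α (radDerivIter j w) y) ^ 2 / rad y ^ 2) ^ ((1:ℝ)/2) := by
  obtain ⟨C, hC0, hC⟩ := exists_abs_le_sum_shellNorm_mixedDeriv hR₀
  refine ⟨C, hC0, fun w x hx hw => ?_⟩
  obtain ⟨c, hc⟩ : ∃ c, rad x = R₀ + c := ⟨rad x - R₀, by ring⟩
  have hRc : 1 < R₀ + c := by linarith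
  have hx : x ∈ radialShiftSource (-c) := ⟨by linarith, by linarith⟩
  have hz : rad (radialShift (-c) x) = R₀ := by rw [rad_radialShift hx, hc, add_neg_cancel_right]
  have hxz : radialShift c (radialShift (-c) x) = x := by
    simpa using radialShift_neg_radialShift hx
  have hsmooth : ∀ y ∈ shell R₀, ContDiffAt ℝ 2 (w ∘ radialShift c) y := fun y hy =>
    (hw _ (hc ▸ mapsTo_radialShift_shell hR₀ hRc hy)).comp y
      (contDiffAt_radialShift c (rad_pos.1 (rad_pos_of_mem_shell hR₀ hy)))
  have h := hC _ _ hz hsmooth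
  simp only [shellNorm_eq_of_eqOn_comp_radialShift hR₀ hRc (eqOn_mixedDeriv_comp_radialShift _ w),
    ← hc, Function.comp_apply, hxz] at h
  rwa [sum_shellNorm_mixedDeriv] at h

/-- the Sobolev estimate on `ℝ₊×S²` from the proof of Lemma 3.5.  For
`w ∈ C₀^∞(ℝ³)` and `|x| ≥ 2`,
`|w(x)| ≤ C Σ_{|α|+j≤2} (∫_{||y|-|x||≤1} |Ω^α∂_r^j w(y)|² |y|⁻² dy)^{1/2}`. -/
theorem stmt_19 :
    ∃ C : ℝ, 0 < C ∧
      ∀ (w : Sp → ℝ), ContDiff ℝ (⊤ : ℕ∞) w → HasCompactSupport w →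
        ∀ x : Sp, 2 ≤ rad x →
          |w x| ≤ C * ∑ m ∈ Finset.range 3, ∑ j ∈ Finset.range (3 - m),
            ∑ α : Fin m → Fin 3,
              (∫ y in {y : Sp | |rad y - rad x| ≤ 1},
                (Rot3Comp α (radDerivIter j w) y) ^ 2 / rad y ^ 2) ^ ((1:ℝ)/2) := by
  obtain ⟨C, hC0, hC⟩ := stmt_19_general one_lt_two
  exact ⟨C, hC0, fun w hw _ x hx => hC w x hx fun y _ => (contDiff_infty.1 hw 2).contDiffAt⟩
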